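/- Under the standing hypotheses, for all s ∈ I the invariants are given by the formulas: κ₁(s) = det(e(s), e'(s), r'(s)), τ₀(s) = det(e(s), e'(s), e''(s)), and τ₁(s) = ⟪σ'(s), e(s)⟫, where det denotes the 3×3 determinant of the matrix with the indicated columns. -/

import Mathlib

noncomputable section
open scoped RealInnerProductSpace

/-- Euclidean 3-space `ℝ³`. -/
abbrev E3 : Type := EuclideanSpace ℝ (Fin 3)

/-- The cross product on `E3`. -/
def cross (u v : E3) : E3 :=
  (WithLp.equiv 2 (Fin 3 → ℝ)).symm
    ![u 1 * v 2 - u 2 * v 1, u 2 * v 0 - u 0 * v 2, u 0 * v 1 - u 1 * v 0]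

/-- Determinant of the 3×3 matrix with columns `u`, `v`, `w`. -/
def det3 (u v w : E3) : ℝ :=
  Matrix.det !![u 0, v 0, w 0; u 1, v 1, w 1; u 2, v 2, w 2]

namespace Ruled

/-- The director curve `e = v₀`. -/
def e (v₀ : ℝ → E3) : ℝ → E3 := v₀

/-- The base curve `r = v₀ × v₁`. -/
def r (v₀ v₁ : ℝ → E3) : ℝ → E3 := fun s => cross (v₀ s) (v₁ s)

/-- The parametrization `F(s,t) = r(s) + t • e(s)` of the ruled surface. -/
def F (v₀ v₁ : ℝ → E3) (s t : ℝ) : E3 := r v₀ v₁ s + t • v₀ s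

/-- `n₀ = v₀'`. -/
def n₀ (v₀ : ℝ → E3) : ℝ → E3 := fun s => deriv v₀ s

/-- `κ₁ = ⟪v₀', v₁'⟫`, the ε-part of the dual curvature. -/
def κ₁ (v₀ v₁ : ℝ → E3) : ℝ → ℝ := fun s => ⟪deriv v₀ s, deriv v₁ s⟫

/-- `n₁ = v₁' - κ₁ • v₀'`. -/
def n₁ (v₀ v₁ : ℝ → E3) : ℝ → E3 := fun s => deriv v₁ s - κ₁ v₀ v₁ s • deriv v₀ s

/-- `t₀ = v₀ × n₀`. -/
def t₀ (v₀ : ℝ → E3) : ℝ → E3 := fun s => cross (v₀ s) (n₀ v₀ s)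

/-- `t₁ = v₀ × n₁ + v₁ × n₀`. -/
def t₁ (v₀ v₁ : ℝ → E3) : ℝ → E3 :=
  fun s => cross (v₀ s) (n₁ v₀ v₁ s) + cross (v₁ s) (n₀ v₀ s)

/-- `τ₀ = ⟪n₀', t₀⟫`, the real part of the dual torsion. -/
def τ₀ (v₀ : ℝ → E3) : ℝ → ℝ := fun s => ⟪deriv (n₀ v₀) s, t₀ v₀ s⟫

/-- `τ₁ = ⟪n₀', t₁⟫ + ⟪n₁', t₀⟫`, the ε-part of the dual torsion. -/
def τ₁ (v₀ v₁ : ℝ → E3) : ℝ → ℝ :=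
  fun s => ⟪deriv (n₀ v₀) s, t₁ v₀ v₁ s⟫ + ⟪deriv (n₁ v₀ v₁) s, t₀ v₀ s⟫

/-- The striction curve `σ(s) = r(s) - ⟪r'(s), e'(s)⟫ • e(s)`. -/
def strict (v₀ v₁ : ℝ → E3) : ℝ → E3 :=
  fun s => r v₀ v₁ s - ⟪deriv (r v₀ v₁) s, deriv (e v₀) s⟫ • e v₀ s

end Ruled

open Ruled

open Filter Matrix WithLp
open scoped Topology

/-!
Along a unit speed curve `v₀` on the unit sphere, `v₀, n₀, t₀` is an orthonormal frame satisfying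
the Frenet equations `n₀' = -v₀ + τ₀ t₀` and `t₀' = -τ₀ n₀`. Since `⟪r', e'⟫ = -⟪v₁', t₀⟫`, the
striction curve is `σ = r + ⟪v₁', t₀⟫ e`. The formula for `τ₁` then holds because the Frenet
equations bring both of its sides to the form `⟪v₁ + v₁'', t₀⟫ - τ₀ κ₁`.
-/

theorem cross_eq_toLp_crossProduct (u v : E3) : cross u v = toLp 2 (ofLp u ⨯₃ ofLp v) := rfl

theorem inner_eq_dotProduct {ι : Type*} [Fintype ι] (u v : EuclideanSpace ℝ ι) :
    ⟪u, v⟫ = ofLp u ⬝ᵥ ofLp v := by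
  rw [EuclideanSpace.inner_eq_star_dotProduct, star_trivial, dotProduct_comm]

theorem isBilinearMap_cross : IsBilinearMap ℝ cross := by
  constructor <;> intros <;> simp [cross_eq_toLp_crossProduct]

theorem cross_self_eq_zero (u : E3) : cross u u = 0 := by
  simp [cross_eq_toLp_crossProduct]

theorem neg_cross_eq_cross_swap (u v : E3) : -cross u v = cross v u := by
  simp only [cross_eq_toLp_crossProduct, ← toLp_neg, cross_anticomm]

theorem cross_cross_right (u v w : E3) : cross u (cross v w) = ⟪u, w⟫ • v - ⟪u, v⟫ • w := by
  simp [cross_eq_toLp_crossProduct, inner_eq_dotProduct, cross_cross_eq_smul_sub_smul',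
    dotProduct_comm (ofLp v)]

theorem inner_cross_rotate (u v w : E3) : ⟪u, cross v w⟫ = ⟪v, cross w u⟫ := by
  simpa only [inner_eq_dotProduct] using! triple_product_permutation (ofLp u) (ofLp v) (ofLp w)

theorem inner_cross_swap (u v w : E3) : ⟪u, cross v w⟫ = -⟪v, cross u w⟫ := by
  rw [inner_cross_rotate, ← neg_cross_eq_cross_swap, inner_neg_right]

theorem inner_self_cross (u v : E3) : ⟪u, cross u v⟫ = 0 := by
  simpa only [inner_eq_dotProduct] using! dot_self_cross (ofLp u) (ofLp v)

theorem inner_cross_self (u v : E3) : ⟪v, cross u v⟫ = 0 := by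
  simpa only [inner_eq_dotProduct] using! dot_cross_self (ofLp u) (ofLp v)

theorem inner_cross_cross (u v w x : E3) :
    ⟪cross u v, cross w x⟫ = ⟪u, w⟫ * ⟪v, x⟫ - ⟪u, x⟫ * ⟪v, w⟫ := by
  simpa only [inner_eq_dotProduct] using!
    cross_dot_cross (ofLp u) (ofLp v) (ofLp w) (ofLp x)

theorem det3_eq_inner_cross (u v w : E3) : det3 u v w = ⟪w, cross u v⟫ := by
  rw [det3, det_fin_three, inner_eq_dotProduct, vec3_dotProduct, cross_eq_toLp_crossProduct,
    cross_apply]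
  simp only [of_apply, cons_val]
  ring

-- With `t = a × p`, expand `t × (x × t)` in two ways.
theorem eq_orthonormal_frame_expansion {a p : E3} (ha : ‖a‖ = 1) (hp : ‖p‖ = 1)
    (hap : ⟪a, p⟫ = 0) (x : E3) :
    x = ⟪x, a⟫ • a + ⟪x, p⟫ • p + ⟪x, cross a p⟫ • cross a p := by
  have haa : ⟪a, a⟫ = 1 := inner_self_eq_one_of_norm_eq_one ha
  have hpp : ⟪p, p⟫ = 1 := inner_self_eq_one_of_norm_eq_one hp
  have hpa : ⟪p, a⟫ = 0 := inner_eq_zero_symm.mp hap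
  set t := cross a p with ht
  have inner_t_t : ⟪t, t⟫ = 1 := by rw [ht, inner_cross_cross, haa, hpp, hap]; ring
  have cross_t_a : cross t a = p := by
    rw [← neg_cross_eq_cross_swap, ht, cross_cross_right, haa, hap]; module
  have cross_t_p : cross t p = -a := by
    rw [← neg_cross_eq_cross_swap, ht, cross_cross_right, hpp, hpa]; module
  have expand_inner : cross x t = ⟪x, p⟫ • a + (-⟪x, a⟫) • p := by
    rw [ht, cross_cross_right]; module
  have expand_outer : cross t (cross x t) = x - ⟪x, t⟫ • t := by
    rw [cross_cross_right, inner_t_t, real_inner_comm, one_smul]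
  rw [expand_inner, isBilinearMap_cross.add_right, isBilinearMap_cross.smul_right,
    isBilinearMap_cross.smul_right, cross_t_a, cross_t_p] at expand_outer
  rw [← sub_eq_iff_eq_add, ← expand_outer]
  module

theorem hasDerivAt_cross {f g : ℝ → E3} {f' g' : E3} {s : ℝ} (hf : HasDerivAt f f' s)
    (hg : HasDerivAt g g' s) :
    HasDerivAt (fun x => cross (f x) (g x)) (cross (f s) g' + cross f' (g s)) s :=
  isBilinearMap_cross.toContinuousBilinearMap.hasDerivAt_of_bilinear (fun _ => hf) fun _ => hg

section InnerProductSpace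

variable {E : Type*} [NormedAddCommGroup E] [InnerProductSpace ℝ E] {f g : ℝ → E} {s c : ℝ}

theorem inner_deriv_eq_neg_of_eventually_inner_eq (hf : DifferentiableAt ℝ f s)
    (hg : DifferentiableAt ℝ g s) (hfg : ∀ᶠ x in 𝓝 s, ⟪f x, g x⟫ = c) :
    ⟪f s, deriv g s⟫ = -⟪deriv f s, g s⟫ := by
  have deriv_zero : deriv (fun x => ⟪f x, g x⟫) s = 0 := by
    rw [EventuallyEq.deriv_eq (f := fun _ => c) hfg, deriv_const]
  rw [deriv_inner_apply ℝ hf hg] at deriv_zero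
  exact eq_neg_of_add_eq_zero_left deriv_zero

theorem inner_deriv_self_eq_zero_of_eventually_norm_eq (hf : DifferentiableAt ℝ f s)
    (hfc : ∀ᶠ x in 𝓝 s, ‖f x‖ = c) : ⟪f s, deriv f s⟫ = 0 := by
  have inner_const : ∀ᶠ x in 𝓝 s, ⟪f x, f x⟫ = c ^ 2 :=
    hfc.mono fun x hx => by rw [real_inner_self_eq_norm_sq, hx]
  have eq_neg_self : ⟪f s, deriv f s⟫ = -⟪f s, deriv f s⟫ :=
    (inner_deriv_eq_neg_of_eventually_inner_eq hf hf inner_const).trans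
      (by rw [real_inner_comm])
  exact self_eq_neg.mp eq_neg_self

end InnerProductSpace

theorem differentiableAt_deriv_of_contDiffAt_two {𝕜 F : Type*} [NontriviallyNormedField 𝕜]
    [NormedAddCommGroup F] [NormedSpace 𝕜 F] {f : 𝕜 → F} {x : 𝕜} (hf : ContDiffAt 𝕜 2 f x) :
    DifferentiableAt 𝕜 (deriv f) x :=
  (hf.derivWithin one_add_one_eq_two.le).differentiableAt_one

namespace Ruled

variable {v₀ v₁ : ℝ → E3} {s : ℝ}

section Frenet

theorem inner_e_n₀ (hv₀ : DifferentiableAt ℝ v₀ s) (hunit : ∀ᶠ x in 𝓝 s, ‖v₀ x‖ = 1) :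
    ⟪v₀ s, n₀ v₀ s⟫ = 0 :=
  inner_deriv_self_eq_zero_of_eventually_norm_eq hv₀ hunit

theorem inner_deriv_n₀_e (hv₀ : ContDiffAt ℝ 2 v₀ s) (hunit : ∀ᶠ x in 𝓝 s, ‖v₀ x‖ = 1) :
    ⟪deriv (n₀ v₀) s, v₀ s⟫ = -‖n₀ v₀ s‖ ^ 2 := by
  have inner_e_n₀_eq_zero : ∀ᶠ x in 𝓝 s, ⟪v₀ x, n₀ v₀ x⟫ = 0 := by
    filter_upwards [hv₀.eventually (by simp), hunit.eventually_nhds] with x hx hunit_x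
    exact inner_e_n₀ (hx.differentiableAt two_ne_zero) hunit_x
  calc ⟪deriv (n₀ v₀) s, v₀ s⟫
      = ⟪v₀ s, deriv (n₀ v₀) s⟫ := real_inner_comm _ _
    _ = -⟪n₀ v₀ s, n₀ v₀ s⟫ :=
        inner_deriv_eq_neg_of_eventually_inner_eq (hv₀.differentiableAt two_ne_zero)
          (differentiableAt_deriv_of_contDiffAt_two hv₀) inner_e_n₀_eq_zero
    _ = -‖n₀ v₀ s‖ ^ 2 := by rw [real_inner_self_eq_norm_sq]

variable (hv₀ : ContDiffAt ℝ 2 v₀ s) (hunit : ∀ᶠ x in 𝓝 s, ‖v₀ x‖ = 1)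
  (harc : ∀ᶠ x in 𝓝 s, ‖n₀ v₀ x‖ = 1)
include hv₀ hunit harc

theorem deriv_n₀ : deriv (n₀ v₀) s = -v₀ s + τ₀ v₀ s • t₀ v₀ s := by
  have hdiff₀ : DifferentiableAt ℝ v₀ s := hv₀.differentiableAt two_ne_zero
  have inner_n₀ : ⟪deriv (n₀ v₀) s, n₀ v₀ s⟫ = 0 :=
    inner_eq_zero_symm.mp <| inner_deriv_self_eq_zero_of_eventually_norm_eq
      (differentiableAt_deriv_of_contDiffAt_two hv₀) harc
  rw [eq_orthonormal_frame_expansion hunit.self_of_nhds harc.self_of_nhds (inner_e_n₀ hdiff₀ hunit)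
    (deriv (n₀ v₀) s), inner_deriv_n₀_e hv₀ hunit,
    harc.self_of_nhds, inner_n₀, τ₀, t₀]
  module

theorem hasDerivAt_t₀ : HasDerivAt (t₀ v₀) (-(τ₀ v₀ s • n₀ v₀ s)) s := by
  have hdiff₀ : DifferentiableAt ℝ v₀ s := hv₀.differentiableAt two_ne_zero
  have hn₀ : HasDerivAt (n₀ v₀) (-v₀ s + τ₀ v₀ s • t₀ v₀ s) s :=
    deriv_n₀ hv₀ hunit harc ▸ (differentiableAt_deriv_of_contDiffAt_two hv₀).hasDerivAt
  have cross_e_t₀ : cross (v₀ s) (t₀ v₀ s) = -n₀ v₀ s := by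
    rw [t₀, cross_cross_right, inner_e_n₀ hdiff₀ hunit,
      inner_self_eq_one_of_norm_eq_one hunit.self_of_nhds]
    module
  have cross_n₀_n₀ : cross (deriv v₀ s) (n₀ v₀ s) = 0 := cross_self_eq_zero _
  refine (hasDerivAt_cross hdiff₀.hasDerivAt hn₀).congr_deriv ?_
  rw [← neg_one_smul ℝ (v₀ s), isBilinearMap_cross.add_right, isBilinearMap_cross.smul_right,
    isBilinearMap_cross.smul_right, cross_self_eq_zero, cross_e_t₀, cross_n₀_n₀]
  module

end Frenet

section BaseCurve

theorem hasDerivAt_r (hv₀ : DifferentiableAt ℝ v₀ s) (hv₁ : DifferentiableAt ℝ v₁ s) :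
    HasDerivAt (r v₀ v₁) (cross (v₀ s) (deriv v₁ s) + cross (n₀ v₀ s) (v₁ s)) s :=
  hasDerivAt_cross hv₀.hasDerivAt hv₁.hasDerivAt

variable (hv₀ : DifferentiableAt ℝ v₀ s) (hv₁ : DifferentiableAt ℝ v₁ s)
include hv₀ hv₁

theorem inner_deriv_r_e : ⟪deriv (r v₀ v₁) s, v₀ s⟫ = ⟪v₁ s, t₀ v₀ s⟫ := by
  rw [(hasDerivAt_r hv₀ hv₁).deriv, real_inner_comm, inner_add_right, inner_self_cross, zero_add,
    inner_cross_rotate, inner_cross_rotate, t₀]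

theorem inner_deriv_r_n₀ : ⟪deriv (r v₀ v₁) s, n₀ v₀ s⟫ = -⟪deriv v₁ s, t₀ v₀ s⟫ := by
  rw [(hasDerivAt_r hv₀ hv₁).deriv, real_inner_comm, inner_add_right, inner_self_cross, add_zero,
    inner_cross_swap, inner_cross_rotate, inner_cross_rotate, t₀]

theorem inner_deriv_r_t₀ (hunit : ‖v₀ s‖ = 1) (he_n₀ : ⟪v₀ s, n₀ v₀ s⟫ = 0)
    (horth : ⟪v₀ s, v₁ s⟫ = 0) : ⟪deriv (r v₀ v₁) s, t₀ v₀ s⟫ = κ₁ v₀ v₁ s := by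
  rw [(hasDerivAt_r hv₀ hv₁).deriv, t₀, inner_add_left, inner_cross_cross, inner_cross_cross,
    inner_self_eq_one_of_norm_eq_one hunit, he_n₀, real_inner_comm (v₀ s) (v₁ s), horth,
    real_inner_comm (v₀ s) (n₀ v₀ s), he_n₀, κ₁, real_inner_comm (deriv v₁ s), n₀]
  ring

theorem strict_eq_r_add_smul : strict v₀ v₁ s = r v₀ v₁ s + ⟪deriv v₁ s, t₀ v₀ s⟫ • v₀ s := by
  have inner_deriv_r_deriv_e : ⟪deriv (r v₀ v₁) s, deriv (e v₀) s⟫ = -⟪deriv v₁ s, t₀ v₀ s⟫ :=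
    inner_deriv_r_n₀ hv₀ hv₁
  rw [strict, inner_deriv_r_deriv_e, neg_smul, sub_neg_eq_add, e]

end BaseCurve

theorem κ₁_eq_det3 (hv₀ : DifferentiableAt ℝ v₀ s) (hv₁ : DifferentiableAt ℝ v₁ s)
    (hunit : ∀ᶠ x in 𝓝 s, ‖v₀ x‖ = 1) (horth : ⟪v₀ s, v₁ s⟫ = 0) :
    κ₁ v₀ v₁ s = det3 (e v₀ s) (deriv (e v₀) s) (deriv (r v₀ v₁) s) := by
  rw [det3_eq_inner_cross]
  exact (inner_deriv_r_t₀ hv₀ hv₁ hunit.self_of_nhds (inner_e_n₀ hv₀ hunit) horth).symm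

theorem τ₀_eq_det3 (v₀ : ℝ → E3) (s : ℝ) :
    τ₀ v₀ s = det3 (e v₀ s) (deriv (e v₀) s) (deriv (deriv (e v₀)) s) :=
  (det3_eq_inner_cross _ _ _).symm

section Torsion

theorem inner_e_t₁ : ⟪v₀ s, t₁ v₀ v₁ s⟫ = -⟪v₁ s, t₀ v₀ s⟫ := by
  rw [t₁, inner_add_right, inner_self_cross, zero_add, inner_cross_swap, t₀]

theorem inner_t₀_t₁ (harc : ‖n₀ v₀ s‖ = 1) (he_n₀ : ⟪v₀ s, n₀ v₀ s⟫ = 0)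
    (horth : ⟪v₀ s, v₁ s⟫ = 0) : ⟪t₀ v₀ s, t₁ v₀ v₁ s⟫ = 0 := by
  have inner_n₀_n₁ : ⟪n₀ v₀ s, n₁ v₀ v₁ s⟫ = 0 := by
    rw [n₀] at harc ⊢
    rw [n₁, inner_sub_right, real_inner_smul_right, inner_self_eq_one_of_norm_eq_one harc, κ₁,
      mul_one, sub_self]
  rw [t₀, t₁, inner_add_right, inner_cross_cross, inner_cross_cross, inner_n₀_n₁, horth, he_n₀,
    inner_eq_zero_symm.mp he_n₀]
  ring

theorem inner_deriv_n₁_t₀ (hn₀ : DifferentiableAt ℝ (n₀ v₀) s)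
    (hv₁ : DifferentiableAt ℝ (deriv v₁) s) :
    ⟪deriv (n₁ v₀ v₁) s, t₀ v₀ s⟫ = ⟪deriv (deriv v₁) s, t₀ v₀ s⟫ - τ₀ v₀ s * κ₁ v₀ v₁ s := by
  have hκ₁ : DifferentiableAt ℝ (κ₁ v₀ v₁) s := hn₀.inner ℝ hv₁
  have hn₁ : HasDerivAt (n₁ v₀ v₁) (deriv (deriv v₁) s -
      (κ₁ v₀ v₁ s • deriv (n₀ v₀) s + deriv (κ₁ v₀ v₁) s • n₀ v₀ s)) s :=
    hv₁.hasDerivAt.sub (hκ₁.hasDerivAt.smul hn₀.hasDerivAt)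
  have inner_n₀_t₀ : ⟪n₀ v₀ s, t₀ v₀ s⟫ = 0 := inner_cross_self _ _
  rw [hn₁.deriv, inner_sub_left, inner_add_left, real_inner_smul_left, real_inner_smul_left,
    inner_n₀_t₀, τ₀]
  ring

variable (hv₀ : ContDiffAt ℝ 2 v₀ s) (hv₁ : ContDiffAt ℝ 2 v₁ s)
  (hunit : ∀ᶠ x in 𝓝 s, ‖v₀ x‖ = 1) (harc : ∀ᶠ x in 𝓝 s, ‖n₀ v₀ x‖ = 1)
include hv₀ hv₁ hunit harc

theorem τ₁_eq_inner_t₀_sub (horth : ⟪v₀ s, v₁ s⟫ = 0) :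
    τ₁ v₀ v₁ s = ⟪v₁ s + deriv (deriv v₁) s, t₀ v₀ s⟫ - τ₀ v₀ s * κ₁ v₀ v₁ s := by
  have he_n₀ := inner_e_n₀ (hv₀.differentiableAt two_ne_zero) hunit
  have inner_deriv_n₀_t₁ : ⟪deriv (n₀ v₀) s, t₁ v₀ v₁ s⟫ = ⟪v₁ s, t₀ v₀ s⟫ := by
    rw [deriv_n₀ hv₀ hunit harc, inner_add_left, inner_neg_left, real_inner_smul_left, inner_e_t₁,
      inner_t₀_t₁ harc.self_of_nhds he_n₀ horth]
    ring
  rw [τ₁, inner_deriv_n₀_t₁, inner_deriv_n₁_t₀ (differentiableAt_deriv_of_contDiffAt_two hv₀)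
    (differentiableAt_deriv_of_contDiffAt_two hv₁), inner_add_left]
  ring

theorem hasDerivAt_inner_deriv_t₀ : HasDerivAt (fun x => ⟪deriv v₁ x, t₀ v₀ x⟫)
    (⟪deriv (deriv v₁) s, t₀ v₀ s⟫ - τ₀ v₀ s * κ₁ v₀ v₁ s) s := by
  refine ((differentiableAt_deriv_of_contDiffAt_two hv₁).hasDerivAt.inner ℝ
    (hasDerivAt_t₀ hv₀ hunit harc)).congr_deriv ?_
  rw [inner_neg_right, real_inner_smul_right, κ₁, n₀, real_inner_comm (deriv v₀ s)]
  ring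

theorem inner_deriv_strict_e :
    ⟪deriv (strict v₀ v₁) s, v₀ s⟫ =
      ⟪v₁ s + deriv (deriv v₁) s, t₀ v₀ s⟫ - τ₀ v₀ s * κ₁ v₀ v₁ s := by
  have hdiff₀ : DifferentiableAt ℝ v₀ s := hv₀.differentiableAt two_ne_zero
  have hdiff₁ : DifferentiableAt ℝ v₁ s := hv₁.differentiableAt two_ne_zero
  have strict_eq : strict v₀ v₁ =ᶠ[𝓝 s] fun x => r v₀ v₁ x + ⟪deriv v₁ x, t₀ v₀ x⟫ • v₀ x := by
    filter_upwards [hv₀.eventually (by simp), hv₁.eventually (by simp)] with x hx₀ hx₁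
    exact strict_eq_r_add_smul (hx₀.differentiableAt two_ne_zero)
      (hx₁.differentiableAt two_ne_zero)
  have hr : HasDerivAt (r v₀ v₁) (deriv (r v₀ v₁) s) s :=
    (hasDerivAt_r hdiff₀ hdiff₁).differentiableAt.hasDerivAt
  have deriv_strict : deriv (strict v₀ v₁) s = deriv (r v₀ v₁) s +
      (⟪deriv v₁ s, t₀ v₀ s⟫ • deriv v₀ s +
        (⟪deriv (deriv v₁) s, t₀ v₀ s⟫ - τ₀ v₀ s * κ₁ v₀ v₁ s) • v₀ s) := by
    rw [strict_eq.deriv_eq]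
    exact (hr.add
      ((hasDerivAt_inner_deriv_t₀ hv₀ hv₁ hunit harc).smul hdiff₀.hasDerivAt)).deriv
  have inner_n₀_e : ⟪deriv v₀ s, v₀ s⟫ = 0 := inner_eq_zero_symm.mp (inner_e_n₀ hdiff₀ hunit)
  rw [deriv_strict, inner_add_left, inner_add_left, inner_deriv_r_e hdiff₀ hdiff₁,
    real_inner_smul_left, real_inner_smul_left, inner_n₀_e,
    inner_self_eq_one_of_norm_eq_one hunit.self_of_nhds, inner_add_left]
  ring

end Torsion

end Ruled

theorem invariants_formulas_general {v₀ v₁ : ℝ → E3} {s : ℝ}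
    (hv₀ : ContDiffAt ℝ 2 v₀ s) (hv₁ : ContDiffAt ℝ 2 v₁ s)
    (hunit : ∀ᶠ x in 𝓝 s, ‖v₀ x‖ = 1) (horth : ⟪v₀ s, v₁ s⟫ = 0)
    (harc : ∀ᶠ x in 𝓝 s, ‖deriv v₀ x‖ = 1) :
    κ₁ v₀ v₁ s = det3 (e v₀ s) (deriv (e v₀) s) (deriv (r v₀ v₁) s) ∧
    τ₀ v₀ s = det3 (e v₀ s) (deriv (e v₀) s) (deriv (deriv (e v₀)) s) ∧
    τ₁ v₀ v₁ s = ⟪deriv (strict v₀ v₁) s, e v₀ s⟫ := by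
  refine ⟨κ₁_eq_det3 (hv₀.differentiableAt two_ne_zero) (hv₁.differentiableAt two_ne_zero)
    hunit horth, τ₀_eq_det3 v₀ s, ?_⟩
  exact (τ₁_eq_inner_t₀_sub hv₀ hv₁ hunit harc horth).trans
    (inner_deriv_strict_e hv₀ hv₁ hunit harc).symm

/-- Formulas for the invariants: `κ₁ = det(e, e', r')`, `τ₀ = det(e, e', e'')`,
`τ₁ = ⟪σ', e⟫`. -/
theorem invariants_formulas
    (I : Set ℝ) (v₀ v₁ : ℝ → E3)
    (hI : IsOpen I) (hI' : I.OrdConnected)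
    (hv₀ : ContDiffOn ℝ (⊤ : ℕ∞) v₀ I) (hv₁ : ContDiffOn ℝ (⊤ : ℕ∞) v₁ I)
    (hunit : ∀ s ∈ I, ‖v₀ s‖ = 1) (horth : ∀ s ∈ I, ⟪v₀ s, v₁ s⟫ = 0)
    (harc : ∀ s ∈ I, ‖deriv v₀ s‖ = 1) :
    ∀ s ∈ I,
      κ₁ v₀ v₁ s = det3 (e v₀ s) (deriv (e v₀) s) (deriv (r v₀ v₁) s) ∧
      τ₀ v₀ s = det3 (e v₀ s) (deriv (e v₀) s) (deriv (deriv (e v₀)) s) ∧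
      τ₁ v₀ v₁ s = ⟪deriv (strict v₀ v₁) s, e v₀ s⟫ := by
  intro s hs
  have hs_nhds : I ∈ 𝓝 s := hI.mem_nhds hs
  exact invariants_formulas_general ((hv₀.contDiffAt hs_nhds).of_le ENat.LEInfty.out)
    ((hv₁.contDiffAt hs_nhds).of_le ENat.LEInfty.out) (eventually_of_mem hs_nhds hunit)
    (horth s hs) (eventually_of_mem hs_nhds harc)
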